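/- Let q = p be a prime, let s ≠ 1 be such that s is not a multiple of q, and let h ≥ 2. If there exists a generalized Hadamard matrix H(q,s), then there exists a GH code C_H of length n = q^h·s over 𝔽_q with ker(C_H) = k if and only if k ∈ {1, 2, …, h}. -/

import Mathlib

open Finset

/-- `H` is a generalized Hadamard matrix with parameter `lam`: for every pair of
distinct rows, the multiset of coordinatewise differences contains every element
of `F` exactly `lam` times. -/
def IsGH {F : Type*} [Fintype F] [DecidableEq F] [Sub F]
    {ι : Type*} [Fintype ι] (lam : ℕ) (H : Matrix ι ι F) : Prop :=
  ∀ i j : ι, i ≠ j → ∀ a : F,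
    (Finset.univ.filter (fun s => H i s - H j s = a)).card = lam

/-- A matrix is normalized if its first row and first column are all zeros. -/
def Normalized {F : Type*} [Zero F] {n : ℕ} (H : Matrix (Fin n) (Fin n) F) : Prop :=
  ∀ i s : Fin n, (i.val = 0 ∨ s.val = 0) → H i s = 0

/-- The code `F_H` whose codewords are the rows of `H`. -/
def rowSet {F ι : Type*} (H : Matrix ι ι F) : Set (ι → F) :=
  Set.range (fun i => H i)

/-- The GH code `C_H = ⋃_{α ∈ F} (F_H + α·𝟏)`. -/
def ghCode {F ι : Type*} [Add F] (H : Matrix ι ι F) : Set (ι → F) :=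
  {v | ∃ (α : F) (i : ι), v = fun s => H i s + α}

/-- The rank of a code: the dimension of its linear span. -/
noncomputable def rankC {F ι : Type*} [Field F] (C : Set (ι → F)) : ℕ :=
  Module.finrank F (Submodule.span F C)

/-- The kernel `K(C) = {x : αx + C = C for all α}` of a code. -/
def kerSet {F ι : Type*} [Mul F] [Add F] (C : Set (ι → F)) : Set (ι → F) :=
  {x | ∀ α : F, (fun c => (fun i => α * x i) + c) '' C = C}

/-- The dimension of the kernel of a code. -/
noncomputable def kerDim {F ι : Type*} [Field F] (C : Set (ι → F)) : ℕ :=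
  Module.finrank F (Submodule.span F (kerSet C))

/-- The `p`-kernel `K_p(C) = {x : x + C = C}` of a code. -/
def pKerSet {F ι : Type*} [Add F] (C : Set (ι → F)) : Set (ι → F) :=
  {x | (fun c => x + c) '' C = C}

/-- The Euclidean orthogonal code `C^⊥`. -/
def dualSet {F ι : Type*} [CommRing F] [Fintype ι] (C : Set (ι → F)) : Set (ι → F) :=
  {v | ∀ w ∈ C, ∑ i, v i * w i = 0}

/-- Two matrices are translation equivalent if the rows of one are obtained from the
rows of the other by adding a fixed vector. -/
def TransEquiv {F ι : Type*} [Add F] (B B' : Matrix ι ι F) : Prop :=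
  ∃ v : ι → F, rowSet B' = (fun b => v + b) '' rowSet B

/-- The Kronecker sum `H₁ ⊕ H₂`. -/
def kroneckerSum {F ι κ : Type*} [Add F] (H₁ : Matrix ι ι F) (H₂ : Matrix κ κ F) :
    Matrix (ι × κ) (ι × κ) F :=
  fun p r => H₁ p.1 r.1 + H₂ p.2 r.2

/-- The Kronecker sum `H₁ ⊕ [B₁, …, Bₙ]`, whose `(i,j)` block is `h_{ij} + B_i`. -/
def kroneckerSumFam {F ι κ : Type*} [Add F] (H₁ : Matrix ι ι F) (B : ι → Matrix κ κ F) :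
    Matrix (ι × κ) (ι × κ) F :=
  fun p r => H₁ p.1 r.1 + B p.1 p.2 r.2

/-- The multiplicative-table matrix `S_q` of a field. -/
def mulTable (F : Type*) [Mul F] : Matrix F F F := fun i j => i * j

/-- A code is `K`-additive, for a subfield `K`, if it is a linear space over `K`. -/
def IsAdditiveOver {F ι : Type*} [Field F] (K : Subfield F) (C : Set (ι → F)) : Prop :=
  (0 : ι → F) ∈ C ∧ (∀ x ∈ C, ∀ y ∈ C, x + y ∈ C) ∧
    ∀ (a : K), ∀ x ∈ C, (fun i => (a : F) * x i) ∈ C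

/-- A word is equidistributed if it takes every value exactly `lam` times. -/
def Equidistributed {F ι : Type*} [DecidableEq F] [Fintype ι] (lam : ℕ) (v : ι → F) : Prop :=
  ∀ a : F, (univ.filter (fun i => v i = a)).card = lam

/-- A word is constant. -/
def IsConstWord {F ι : Type*} (v : ι → F) : Prop :=
  ∃ a : F, ∀ i, v i = a

theorem Equidistributed.const_add {F ι : Type*} [Field F] [DecidableEq F] [Fintype ι]
    {lam : ℕ} {v : ι → F} (hv : Equidistributed lam v) (a : F) :
    Equidistributed lam (fun i => a + v i) := fun b => by
  rw [← hv (b - a)]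
  congr 1
  ext i
  simp [eq_sub_iff_add_eq']

theorem not_equidistributed_of_isConstWord {F ι : Type*} [DecidableEq F] [Fintype ι] {lam : ℕ}
    (hlam : lam < Fintype.card ι) {v : ι → F}
    (hv : IsConstWord v) : ¬ Equidistributed lam v := by
  intro h
  obtain ⟨a, ha⟩ := hv
  have := h a
  simp [ha] at this
  omega

section Kernel

variable {F ι κ : Type*} [Field F]

theorem mem_kerSet_iff {C : Set (ι → F)} {x : ι → F} :
    x ∈ kerSet C ↔ ∀ (α : F), ∀ c ∈ C, α • x + c ∈ C := by
  constructor
  · intro hx α c hc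
    rw [← hx α]
    exact ⟨c, hc, rfl⟩
  · intro hx α
    ext c
    constructor
    · rintro ⟨d, hd, rfl⟩
      exact hx α d hd
    · intro hc
      refine ⟨(-α) • x + c, hx _ c hc, ?_⟩
      ext i
      simp

/-- The kernel of a code as a linear subspace. -/
def kernelSubmodule (C : Set (ι → F)) : Submodule F (ι → F) where
  carrier := kerSet C
  zero_mem' := mem_kerSet_iff.2 fun α c hc => by simpa using hc
  add_mem' {x y} hx hy := mem_kerSet_iff.2 fun α c hc => by
    rw [smul_add, add_assoc]
    exact mem_kerSet_iff.1 hx α _ (mem_kerSet_iff.1 hy α c hc)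
  smul_mem' β x hx := mem_kerSet_iff.2 fun α c hc => by
    rw [smul_smul]
    exact mem_kerSet_iff.1 hx _ c hc

theorem mem_kernelSubmodule {C : Set (ι → F)} {x : ι → F} :
    x ∈ kernelSubmodule C ↔ ∀ (α : F), ∀ c ∈ C, α • x + c ∈ C :=
  mem_kerSet_iff

theorem kerDim_eq_finrank (C : Set (ι → F)) :
    kerDim C = Module.finrank F (kernelSubmodule C) := by
  have : Submodule.span F (kerSet C) = kernelSubmodule C :=
    Submodule.span_eq (kernelSubmodule C)
  rw [kerDim, this]

theorem add_mem_of_mem_kernelSubmodule {C : Set (ι → F)} {x c : ι → F}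
    (hx : x ∈ kernelSubmodule C) (hc : c ∈ C) : x + c ∈ C := by
  simpa using mem_kernelSubmodule.1 hx 1 c hc

theorem add_const_mem_ghCode {H : Matrix ι ι F} {c : ι → F} (hc : c ∈ ghCode H) (a : F) :
    (fun i => a + c i) ∈ ghCode H := by
  obtain ⟨α, i, rfl⟩ := hc
  exact ⟨a + α, i, by ext; ring⟩

theorem row_mem_ghCode (H : Matrix ι ι F) (i : ι) : H i ∈ ghCode H :=
  ⟨0, i, by simp⟩

theorem const_mem_kernelSubmodule (H : Matrix ι ι F) (a : F) :
    (fun _ => a) ∈ kernelSubmodule (ghCode H) :=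
  mem_kernelSubmodule.2 fun α _ hc => add_const_mem_ghCode hc (α * a)

/-- The kernel is invariant under translating the code. -/
theorem kernelSubmodule_translate {C D : Set (ι → F)} (v : ι → F)
    (h : ∀ c, c ∈ D ↔ v + c ∈ C) : kernelSubmodule D = kernelSubmodule C := by
  ext x
  simp only [mem_kernelSubmodule, h]
  constructor
  · intro hx α c hc
    have := hx α (c - v) (by simpa using hc)
    rwa [show v + (α • x + (c - v)) = α • x + c by abel] at this
  · intro hx α c hc
    rw [show v + (α • x + c) = α • x + (v + c) by abel]
    exact hx α _ hc

/-- The dimension of the kernel is invariant under relabelling the coordinates. -/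
theorem kerDim_reindex {C : Set (ι → F)} {D : Set (κ → F)} (e : κ ≃ ι)
    (h : ∀ c, c ∈ C ↔ c ∘ e ∈ D) : kerDim D = kerDim C := by
  rw [kerDim_eq_finrank, kerDim_eq_finrank]
  have : kernelSubmodule D =
      (kernelSubmodule C).map (LinearEquiv.funCongrLeft F F e : (ι → F) →ₗ[F] (κ → F)) := by
    ext x
    rw [Submodule.mem_map_equiv, mem_kernelSubmodule, mem_kernelSubmodule]
    have hsymm : ((LinearEquiv.funCongrLeft F F e).symm x) = x ∘ e.symm := rfl
    rw [hsymm]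
    constructor
    · intro hx α c hc
      rw [h] at hc ⊢
      convert hx α _ hc using 1
      ext i
      simp
    · intro hx α c hc
      have := hx α (c ∘ e.symm) (by rw [h]; convert hc using 1; ext i; simp)
      rw [h] at this
      convert this using 1
      ext i
      simp
  rw [this]
  exact LinearEquiv.finrank_map_eq _ _

end Kernel

section Words

variable {F ι : Type*} [Field F] [Fintype F] [DecidableEq F] [Fintype ι]

theorem IsGH.equidistributed {lam : ℕ} {H : Matrix ι ι F} (hH : IsGH lam H) {i j : ι}
    (hij : i ≠ j) : Equidistributed lam (H i - H j) :=
  hH i j hij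

theorem IsGH.isConstWord_or_equidistributed {lam : ℕ} {H : Matrix ι ι F} (hH : IsGH lam H)
    {c d : ι → F} (hc : c ∈ ghCode H) (hd : d ∈ ghCode H) :
    IsConstWord (c - d) ∨ Equidistributed lam (c - d) := by
  obtain ⟨α, i, rfl⟩ := hc
  obtain ⟨β, j, rfl⟩ := hd
  by_cases hij : i = j
  · subst hij
    exact Or.inl ⟨α - β, fun t => by simp⟩
  · refine Or.inr ?_
    convert (hH.equidistributed hij).const_add (α - β) using 1
    ext t
    simp only [Pi.sub_apply]
    ring

theorem IsGH.isConstWord_or_equidistributed_of_mem_kernel {lam : ℕ} {H : Matrix ι ι F}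
    [Nonempty ι] (hH : IsGH lam H) {u : ι → F} (hu : u ∈ kernelSubmodule (ghCode H)) :
    IsConstWord u ∨ Equidistributed lam u := by
  obtain ⟨i⟩ := ‹Nonempty ι›
  have h := hH.isConstWord_or_equidistributed
    (add_mem_of_mem_kernelSubmodule hu (row_mem_ghCode H i)) (row_mem_ghCode H i)
  rwa [add_sub_cancel_right] at h

/-- The fibres of a nonzero linear functional on a finite space have equal size. -/
theorem card_mul_card_fiber_of_ne_zero {V : Type*} [AddCommGroup V] [Module F V] [Fintype V]
    (φ : V →ₗ[F] F) (hφ : φ ≠ 0) (c : F) :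
    Fintype.card F * (univ.filter (fun u => φ u = c)).card = Fintype.card V := by
  have hsurj : Function.Surjective φ := LinearMap.surjective hφ
  have hconst : ∀ b, (univ.filter (fun u => φ u = b)).card =
      (univ.filter (fun u => φ u = c)).card := by
    intro b
    obtain ⟨w, hw⟩ := hsurj (c - b)
    refine Finset.card_bij' (fun u _ => u + w) (fun u _ => u - w) ?_ ?_ ?_ ?_ <;>
      simp +contextual [hw]
  have := Finset.card_eq_sum_card_fiberwise (f := φ) (s := univ) (t := univ) (by simp)
  simp only [hconst, Finset.sum_const, Finset.card_univ, smul_eq_mul] at this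
  exact this.symm

/-- If a linear code `K` contains the constants, its other words are equidistributed, and some
coset of `K` consists of equidistributed words, then `|F| * |K|` divides `|F|` times the length. -/
theorem pow_finrank_succ_dvd [Nonempty ι] {lam : ℕ}
    (hcard : Fintype.card ι = Fintype.card F * lam) (K : Submodule F (ι → F))
    (hone : ∀ a : F, (fun _ => a) ∈ K)
    (hK : ∀ u ∈ K, IsConstWord u ∨ Equidistributed lam u)
    (x : ι → F) (hx : ∀ u ∈ K, Equidistributed lam (x + u)) :
    Fintype.card F ^ (Module.finrank F K + 1) ∣ Fintype.card F * Fintype.card ι := by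
  classical
  obtain ⟨j₀⟩ := ‹Nonempty ι›
  set p := Fintype.card F with hp
  set n := Fintype.card ι with hn
  have hp1 : 1 < p := Fintype.one_lt_card
  have hq : Fintype.card K = p ^ Module.finrank F K := Module.card_eq_pow_finrank
  set q := Fintype.card K with hqdef
  have hq0 : 0 < q := Fintype.card_pos
  let φ : ι → K →ₗ[F] F := fun j =>
    (LinearMap.proj (R := F) (φ := fun _ : ι => F) j - LinearMap.proj j₀).comp K.subtype
  have hφ : ∀ j u, φ j u = (u : ι → F) j - (u : ι → F) j₀ := fun j u => rfl
  set m := (univ.filter (fun j => φ j = 0)).card with hm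
  set m' := (univ.filter (fun j => ¬ φ j = 0)).card with hm'
  have hmn : m + m' = n := by
    rw [hm, hm', Finset.card_filter_add_card_filter_not, Finset.card_univ]
  -- counting pairs `(u, j)` with `y j + φ j u = 0`, by columns
  have hcount : ∀ y : ι → F,
      p * ∑ u : K, (univ.filter (fun j => y j + φ j u = 0)).card =
        p * q * (univ.filter (fun j => φ j = 0 ∧ y j = 0)).card + q * m' := by
    intro y
    have hswap : ∑ u : K, (univ.filter (fun j => y j + φ j u = 0)).card =
        ∑ j, (univ.filter (fun u : K => y j + φ j u = 0)).card := by
      simp only [Finset.card_filter]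
      exact Finset.sum_comm
    have hj : ∀ j, p * (univ.filter (fun u : K => y j + φ j u = 0)).card =
        p * q * (if φ j = 0 ∧ y j = 0 then 1 else 0) + q * (if ¬ φ j = 0 then 1 else 0) := by
      intro j
      by_cases h0 : φ j = 0
      · by_cases hy : y j = 0
        · simp [h0, hy, hqdef]
        · simp [h0, hy]
      · have := card_mul_card_fiber_of_ne_zero (φ j) h0 (-y j)
        simp only [h0, false_and, if_false, not_false_eq_true, if_true, mul_zero, zero_add,
          mul_one]
        rw [hqdef, ← this, hp]
        congr 2
        ext u
        simp [eq_neg_iff_add_eq_zero, add_comm]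
    rw [hswap, Finset.mul_sum, Finset.sum_congr rfl (fun j _ => hj j), Finset.sum_add_distrib,
      ← Finset.mul_sum, ← Finset.mul_sum, hm']
    simp only [Finset.card_filter]
  have hA : p * (q * lam) =
      p * q * (univ.filter (fun j => φ j = 0 ∧ x j = 0)).card + q * m' := by
    rw [← hcount x]
    congr 1
    have : ∀ u : K, (univ.filter (fun j => x j + φ j u = 0)).card = lam := by
      intro u
      have := (hx u u.2).const_add (-(u : ι → F) j₀) 0
      rw [← this]
      congr 1
      ext j
      simp only [hφ, Pi.add_apply, mem_filter, mem_univ, true_and]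
      rw [show x j + ((u : ι → F) j - (u : ι → F) j₀) =
        -(u : ι → F) j₀ + (x j + (u : ι → F) j) by ring]
    simp [this, hqdef]
  have hB : p * (p * n) + (q - p) * n = p * q * m + q * m' := by
    have h := hcount 0
    simp only [Pi.zero_apply, and_true, zero_add] at h
    rw [hm, ← h]
    have hu : ∀ u : K, p * (univ.filter (fun j => φ j u = 0)).card =
        if IsConstWord (u : ι → F) then p * n else n := by
      intro u
      split_ifs with hc
      · obtain ⟨a, ha⟩ := hc
        simp [hφ, ha, hn]
      · have := ((hK u u.2).resolve_left hc) ((u : ι → F) j₀)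
        rw [hcard, ← this]
        simp only [hφ, sub_eq_zero]
    have hconst : (univ.filter (fun u : K => IsConstWord (u : ι → F))).card = p := by
      rw [hp, ← Finset.card_univ]
      symm
      refine Finset.card_bij (fun a _ => ⟨fun _ => a, hone a⟩) ?_ ?_ ?_
      · intro a _
        simp only [mem_filter, mem_univ, true_and]
        exact ⟨a, fun _ => rfl⟩
      · intro a _ b _ hab
        exact congrFun (congrArg Subtype.val hab) j₀
      · rintro ⟨u, hu⟩ h
        obtain ⟨a, ha⟩ := (Finset.mem_filter.1 h).2
        exact ⟨a, mem_univ _, Subtype.ext (funext fun i => (ha i).symm)⟩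
    have hnot : (univ.filter (fun u : K => ¬ IsConstWord (u : ι → F))).card = q - p := by
      have := Finset.card_filter_add_card_filter_not (s := (univ : Finset K))
        (fun u : K => IsConstWord (u : ι → F))
      rw [hconst, Finset.card_univ] at this
      omega
    rw [Finset.mul_sum, Finset.sum_congr rfl (fun u _ => hu u), Finset.sum_ite, Finset.sum_const,
      Finset.sum_const, hconst, hnot, smul_eq_mul, smul_eq_mul]
  set N := (univ.filter (fun j => φ j = 0 ∧ x j = 0)).card
  have hpq : p ≤ q := by
    rw [hp, hqdef]
    refine Fintype.card_le_of_injective (fun a : F => (⟨fun _ => a, hone a⟩ : K)) ?_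
    intro a b hab
    exact congrFun (congrArg Subtype.val hab) j₀
  have h1 : m = p * N := by
    have : q * m = q * (p * N) := by
      have e : p * (q * lam) = q * n := by rw [hcard]; ring
      rw [e, ← hmn] at hA
      linarith
    exact Nat.eq_of_mul_eq_mul_left hq0 this
  have h2 : p * n = q * m := by
    obtain ⟨p', hp'⟩ : ∃ p', p = p' + 1 := ⟨p - 1, by omega⟩
    obtain ⟨r, hr⟩ : ∃ r, q = r + p := ⟨q - p, by omega⟩
    rw [show q - p = r by omega] at hB
    have : p' * (p * n) = p' * (q * m) := by
      zify at hB hmn hr hp' ⊢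
      linear_combination hB + q * hmn + n * hr - (p * n - q * m : ℤ) * hp'
    exact Nat.eq_of_mul_eq_mul_left (by omega) this
  refine ⟨N, ?_⟩
  rw [h2, h1, hq]
  ring

end Words

theorem one_le_kerDim_ghCode {F ι : Type*} [Field F] [Fintype ι] [Nonempty ι]
    (H : Matrix ι ι F) : 1 ≤ kerDim (ghCode H) := by
  rw [kerDim_eq_finrank, Nat.one_le_iff_ne_zero, ← Nat.pos_iff_ne_zero]
  obtain ⟨i⟩ := ‹Nonempty ι›
  refine Module.finrank_pos_iff_exists_ne_zero.2 ⟨⟨_, const_mem_kernelSubmodule H 1⟩, ?_⟩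
  intro h
  exact one_ne_zero (congrFun (congrArg Subtype.val h) i)

theorem card_filter_eq_pair_add {F ι : Type*} [DecidableEq F] [Fintype ι] [DecidableEq ι]
    {a b : ι} (hab : a ≠ b) (v : ι → F) (c : F) :
    (univ.filter (fun i => v i = c)).card =
      (if v a = c then 1 else 0) + (if v b = c then 1 else 0) +
        ∑ i ∈ (univ.erase a).erase b, if v i = c then 1 else 0 := by
  rw [Finset.card_filter, ← Finset.add_sum_erase univ _ (mem_univ a),
    ← Finset.add_sum_erase (univ.erase a) _ (Finset.mem_erase.2 ⟨hab.symm, mem_univ b⟩)]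
  ring

/-- If two words agree outside `a` and `b` but differ at `a`, and both are constant or
equidistributed, then the value of the second word at `a` is that of the first word at `b`. -/
theorem eq_of_differ_at_pair {F ι : Type*} [Field F] [DecidableEq F] [Fintype ι] [DecidableEq ι]
    {lam : ℕ} (hlam : lam + 2 < Fintype.card ι) {a b : ι}
    (hab : a ≠ b) {v w : ι → F} {δ : F} (hδ : δ ≠ 0)
    (ha : w a = v a + δ) (hrest : ∀ i, i ≠ a → i ≠ b → w i = v i)
    (hv : IsConstWord v ∨ Equidistributed lam v) (hw : IsConstWord w ∨ Equidistributed lam w) :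
    w a = v b := by
  have hsum : ∀ c, ∑ i ∈ (univ.erase a).erase b, (if w i = c then 1 else 0) =
      ∑ i ∈ (univ.erase a).erase b, (if v i = c then 1 else 0) := by
    intro c
    refine Finset.sum_congr rfl fun i hi => ?_
    simp only [mem_erase] at hi
    rw [hrest i hi.2.1 hi.1]
  have hconst : ∀ v w : ι → F, (∀ i, i ≠ a → i ≠ b → w i = v i) → w a ≠ v a →
      IsConstWord v → (IsConstWord w ∨ Equidistributed lam w) → False := by
    rintro v w hrest hne ⟨c, hc⟩ hw
    have hcard : ((univ.erase a).erase b).card = Fintype.card ι - 2 := by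
      rw [Finset.card_erase_of_mem (Finset.mem_erase.2 ⟨hab.symm, mem_univ b⟩),
        Finset.card_erase_of_mem (mem_univ a), Finset.card_univ]
      omega
    have hsub : (univ.erase a).erase b ⊆ univ.filter (fun i => w i = c) := by
      intro i hi
      simp only [mem_erase] at hi
      simp [hrest i hi.2.1 hi.1, hc]
    rcases hw with ⟨d, hd⟩ | hw
    · have hne0 : ((univ.erase a).erase b).Nonempty := by
        rw [← Finset.card_pos]
        omega
      obtain ⟨i, hi⟩ := hne0
      have := (Finset.mem_filter.1 (hsub hi)).2
      rw [hd] at this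
      rw [hd, hc] at hne
      exact hne this
    · have := Finset.card_le_card hsub
      rw [hw c] at this
      omega
  have hwa : w a ≠ v a := by simpa [ha] using hδ
  have hve := hv.resolve_left fun h => hconst v w hrest hwa h hw
  have hwe := hw.resolve_left fun h =>
    hconst w v (fun i h1 h2 => (hrest i h1 h2).symm) hwa.symm h hv
  have h1 := hve (w a)
  have h2 := hwe (w a)
  rw [card_filter_eq_pair_add hab] at h1 h2
  rw [hsum] at h2
  by_contra hne
  rw [if_neg hwa.symm, if_neg (fun h => hne h.symm)] at h1
  rw [if_pos rfl] at h2
  split_ifs at h2 <;> omega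

section Bounds

variable {F ι : Type*} [Field F] [Fintype F] [DecidableEq F] [Fintype ι]

theorem IsGH.codeword_injective {lam : ℕ} {H : Matrix ι ι F} (hH : IsGH lam H)
    (hlam : lam < Fintype.card ι) :
    Function.Injective (fun (x : F × ι) => (fun s => H x.2 s + x.1 : ι → F)) := by
  rintro ⟨α, i⟩ ⟨β, j⟩ h
  have hs : ∀ s, H i s + α = H j s + β := congrFun h
  have hij : i = j := by
    by_contra hij
    refine not_equidistributed_of_isConstWord hlam ?_ (hH.equidistributed hij)
    exact ⟨β - α, fun s => by
      rw [Pi.sub_apply]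
      linear_combination hs s⟩
  subst hij
  have := hs i
  simp_all

/-- The kernel of a GH code of length `|F| ^ h * s` has dimension at most `h` if `s ≠ 1`
is coprime to `|F|`. -/
theorem IsGH.kerDim_le {lam s h : ℕ} {H : Matrix ι ι F} (hH : IsGH lam H)
    (hp : (Fintype.card F).Prime) (hs1 : s ≠ 1) (hs : ¬ Fintype.card F ∣ s)
    (hcard : Fintype.card ι = Fintype.card F * lam) (hlam : 0 < lam)
    (hι : Fintype.card ι = Fintype.card F ^ h * s) :
    kerDim (ghCode H) ≤ h := by
  classical
  rw [kerDim_eq_finrank]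
  set p := Fintype.card F with hpdef
  set K := kernelSubmodule (ghCode H) with hK
  have hlt : lam < Fintype.card ι := by
    rw [hcard]
    nlinarith [hp.two_le]
  have : Nonempty ι := Fintype.card_pos_iff.1 (by omega)
  obtain ⟨i₀⟩ := this
  have : Nonempty ι := ⟨i₀⟩
  have hex : ∃ d ∈ ghCode H, d - H i₀ ∉ K := by
    by_contra! hall
    have hbij : Function.Bijective
        (fun x : F × ι => (⟨(fun t => H x.2 t + x.1) - H i₀, hall _ ⟨x.1, x.2, rfl⟩⟩ : K)) := by
      constructor
      · intro x y hxy
        have h1 := congrArg Subtype.val hxy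
        exact hH.codeword_injective hlt (sub_left_injective h1)
      · rintro ⟨u, hu⟩
        obtain ⟨α, i, hi⟩ := add_mem_of_mem_kernelSubmodule hu (row_mem_ghCode H i₀)
        refine ⟨(α, i), Subtype.ext ?_⟩
        simp only
        rw [← hi, add_sub_cancel_right]
    have hc := Fintype.card_of_bijective hbij
    rw [Fintype.card_prod, Module.card_eq_pow_finrank (K := F) (V := K), hι] at hc
    have hdvd : s ∣ p ^ Module.finrank F K := by
      rw [← hc]
      exact Dvd.intro_left _ (by ring : p * p ^ h * s = _)
    have hcop : Nat.Coprime s (p ^ Module.finrank F K) :=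
      ((hp.coprime_iff_not_dvd.2 hs).symm).pow_right _
    exact hs1 (Nat.Coprime.eq_one_of_dvd hcop hdvd)
  obtain ⟨d, hd, hdK⟩ := hex
  have hdvd := pow_finrank_succ_dvd hcard K (const_mem_kernelSubmodule H)
    (fun u hu => hH.isConstWord_or_equidistributed_of_mem_kernel hu) (d - H i₀) (by
      intro u hu
      have h1 := hH.isConstWord_or_equidistributed (add_mem_of_mem_kernelSubmodule hu hd)
        (row_mem_ghCode H i₀)
      rw [show u + d - H i₀ = d - H i₀ + u by abel] at h1
      refine h1.resolve_left ?_
      rintro ⟨a, ha⟩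
      apply hdK
      have h2 : d - H i₀ = (fun _ => a) - u := by
        ext t
        have := ha t
        simp only [Pi.add_apply, Pi.sub_apply] at this ⊢
        linear_combination this
      rw [h2]
      exact K.sub_mem (const_mem_kernelSubmodule H a) hu)
  rw [← hpdef, hι, ← mul_assoc, ← pow_succ'] at hdvd
  have hcop : Nat.Coprime (p ^ (Module.finrank F K + 1)) s :=
    (hp.coprime_iff_not_dvd.2 hs).pow_left _
  have := (Nat.pow_dvd_pow_iff_le_right hp.one_lt).1 (hcop.dvd_of_dvd_mul_right hdvd)
  omega

/-- There is no binary GH matrix of order `2 * s` with `s > 1` odd. -/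
theorem IsGH.dvd_of_card_eq_two {s : ℕ} {H : Matrix ι ι F} (hH : IsGH s H)
    (hF : Fintype.card F = 2) (hι : Fintype.card ι = 2 * s) (hs : 1 < s) : 2 ∣ s := by
  obtain ⟨i, j, k, hij, hik, hjk⟩ :=
    Fintype.two_lt_card_iff.1 (show 2 < Fintype.card ι by omega)
  have : Nonempty ι := ⟨i⟩
  have htwo : (2 : F) = 0 := by
    have := Nat.cast_card_eq_zero F
    rw [hF] at this
    exact_mod_cast this
  have hcases : ∀ a : F, a = 0 ∨ a = 1 := by
    intro a
    by_contra! h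
    have hc : ({a, 0, 1} : Finset F).card ≤ 2 := hF ▸ Finset.card_le_univ _
    rw [Finset.card_eq_three.2 ⟨a, 0, 1, h.1, h.2, zero_ne_one, rfl⟩] at hc
    omega
  set u : ι → F := H j - H i with hu
  have hmem : ∀ v : ι → F, v ∈ Submodule.span F {(fun _ => 1 : ι → F), u} →
      ∃ a b : F, v = (fun _ => a) + b • u := by
    intro v hv
    obtain ⟨a, b, rfl⟩ := Submodule.mem_span_pair.1 hv
    exact ⟨a, b, by ext; simp⟩
  have hlt : s < Fintype.card ι := by omega
  have hnc : ¬ IsConstWord u := fun h =>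
    not_equidistributed_of_isConstWord hlt h (hH.equidistributed hij.symm)
  have hind : LinearIndependent F ![(fun _ => 1 : ι → F), u] := by
    rw [LinearIndependent.pair_iff' (fun h => one_ne_zero (congrFun h i))]
    intro a ha
    exact hnc ⟨a, fun t => by rw [← ha]; simp⟩
  have hrank : Module.finrank F (Submodule.span F {(fun _ => 1 : ι → F), u}) = 2 := by
    have hrange : Set.range ![(fun _ => 1 : ι → F), u] = {(fun _ => 1 : ι → F), u} := by
      simp [Matrix.range_cons, Set.pair_comm]
    have := finrank_span_eq_card hind
    rwa [hrange, Fintype.card_fin] at this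
  have hdvd := pow_finrank_succ_dvd (hF ▸ hι) (Submodule.span F {(fun _ => 1 : ι → F), u})
    (by
      intro a
      refine Submodule.mem_span_pair.2 ⟨a, 0, ?_⟩
      ext
      simp)
    (by
      intro v hv
      obtain ⟨a, b, rfl⟩ := hmem v hv
      rcases hcases b with rfl | rfl
      · exact Or.inl ⟨a, fun t => by simp⟩
      · refine Or.inr ?_
        rw [one_smul]
        exact (hH.equidistributed hij.symm).const_add a)
    (H k - H i)
    (by
      intro v hv
      obtain ⟨a, b, rfl⟩ := hmem v hv
      rcases hcases b with rfl | rfl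
      · convert (hH.equidistributed hik.symm).const_add a using 1
        ext t
        simp only [Pi.add_apply, Pi.smul_apply, Pi.sub_apply, smul_eq_mul]
        ring
      · convert (hH.equidistributed hjk.symm).const_add a using 1
        ext t
        simp only [hu, Pi.add_apply, Pi.smul_apply, Pi.sub_apply, smul_eq_mul]
        linear_combination (H j t - H i t) * htwo)
  rw [hrank, hF, hι] at hdvd
  omega

/-- Some transposition of the coordinates takes a GH code to a code which contains no translate
of it. -/
theorem IsGH.exists_perm_not_translate {lam : ℕ} {H : Matrix ι ι F} (hH : IsGH lam H)
    (hF : 3 ≤ Fintype.card F) (hcard : Fintype.card ι = Fintype.card F * lam) (hlam : 2 ≤ lam) :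
    ∃ σ : Equiv.Perm ι, ¬ ∃ y : ι → F, ∀ c ∈ ghCode H, (y + c) ∘ σ ∈ ghCode H := by
  classical
  by_contra! hall
  have hn : 3 * lam ≤ Fintype.card ι := by
    rw [hcard]
    exact Nat.mul_le_mul_right _ hF
  obtain ⟨i, j, k, hij, hik, hjk⟩ :=
    Fintype.two_lt_card_iff.1 (show 2 < Fintype.card ι by omega)
  have htwo : ∀ b, b ≠ i → ∀ r s t : ι,
      H r b - H r i = H s b - H s i ∨ H r b - H r i = H t b - H t i ∨
        H s b - H s i = H t b - H t i := by
    intro b hb r s t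
    obtain ⟨y, hy⟩ := hall (Equiv.swap i b)
    have hw : ∀ r, IsConstWord ((y + H r) ∘ Equiv.swap i b - H r) ∨
        Equidistributed lam ((y + H r) ∘ Equiv.swap i b - H r) := fun r =>
      hH.isConstWord_or_equidistributed (hy _ (row_mem_ghCode H r)) (row_mem_ghCode H r)
    have hmove : ∀ r s, H r b - H r i ≠ H s b - H s i →
        y b + (H s b - H s i) = y i - (H r b - H r i) := by
      intro r s hne
      have := eq_of_differ_at_pair (lam := lam) (by omega) hb.symm
        (v := (y + H r) ∘ Equiv.swap i b - H r) (w := (y + H s) ∘ Equiv.swap i b - H s)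
        (δ := (H s b - H s i) - (H r b - H r i)) (sub_ne_zero.2 hne.symm)
        (by simp; ring)
        (by
          intro l h1 h2
          simp [Equiv.swap_apply_of_ne_of_ne h1 h2])
        (hw r) (hw s)
      simp at this
      linear_combination this
    by_contra! hcon
    obtain ⟨h1, h2, h3⟩ := hcon
    apply h3
    have e1 := hmove r s h1
    have e2 := hmove r t h2
    linear_combination e1 - e2
  have hA : ∀ r s, r ≠ s →
      (univ.filter (fun b => H r b - H s b = H r i - H s i)).card = lam := fun r s hrs =>
    hH r s hrs _
  have hE : ∀ r s, r ≠ s →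
      ((univ.filter (fun b => H r b - H s b = H r i - H s i)).erase i).card = lam - 1 := by
    intro r s hrs
    rw [Finset.card_erase_of_mem (by simp), hA r s hrs]
  have hcover : (univ : Finset ι) ⊆
      ((univ.filter (fun b => H i b - H j b = H i i - H j i)).erase i ∪
        (univ.filter (fun b => H i b - H k b = H i i - H k i)).erase i) ∪
      univ.filter (fun b => H j b - H k b = H j i - H k i) := by
    intro b _
    simp only [mem_union, mem_erase, mem_filter, mem_univ, true_and]
    by_cases hb : b = i
    · subst hb
      simp
    · rcases htwo b hb i j k with h | h | h
      · exact Or.inl (Or.inl ⟨hb, by linear_combination h⟩)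
      · exact Or.inl (Or.inr ⟨hb, by linear_combination h⟩)
      · exact Or.inr (by linear_combination h)
  have h1 := Finset.card_le_card hcover
  have h2 := Finset.card_union_le
    ((univ.filter (fun b => H i b - H j b = H i i - H j i)).erase i ∪
        (univ.filter (fun b => H i b - H k b = H i i - H k i)).erase i)
    (univ.filter (fun b => H j b - H k b = H j i - H k i))
  have h3 := Finset.card_union_le
    ((univ.filter (fun b => H i b - H j b = H i i - H j i)).erase i)
    ((univ.filter (fun b => H i b - H k b = H i i - H k i)).erase i)
  rw [hE i j hij, hE i k hik] at h3
  rw [hA j k hjk] at h2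
  rw [Finset.card_univ] at h1
  omega

end Bounds

section Construction

variable {F κ : Type*} [Field F]

theorem mem_ghCode_kroneckerSumFam {B : F → Matrix κ κ F} {w : F × κ → F} :
    w ∈ ghCode (kroneckerSumFam (mulTable F) B) ↔
      ∃ i, ∃ c ∈ ghCode (B i), w = fun t => i * t.1 + c t.2 := by
  constructor
  · rintro ⟨α, ⟨i, r⟩, rfl⟩
    exact ⟨i, _, ⟨α, r, rfl⟩, by ext; simp [kroneckerSumFam, mulTable, add_assoc]⟩
  · rintro ⟨i, _, ⟨α, r, rfl⟩, rfl⟩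
    exact ⟨α, (i, r), by ext; simp [kroneckerSumFam, mulTable, add_assoc]⟩

/-- The word of length `F × κ` whose block with index `j` is `i * j + y`. -/
def blockWord (F κ : Type*) [Field F] : (F × (κ → F)) →ₗ[F] (F × κ → F) where
  toFun x := fun t => x.1 * t.1 + x.2 t.2
  map_add' x y := by ext; simp; ring
  map_smul' a x := by ext; simp; ring

theorem blockWord_apply (x : F × (κ → F)) (t : F × κ) :
    blockWord F κ x t = x.1 * t.1 + x.2 t.2 := rfl

theorem blockWord_injective [Nonempty κ] : Function.Injective (blockWord F κ) := by
  rintro ⟨i, y⟩ ⟨i', y'⟩ h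
  have h' : ∀ t : F × κ, i * t.1 + y t.2 = i' * t.1 + y' t.2 := congrFun h
  have hy : y = y' := by
    ext c
    simpa using h' (0, c)
  subst hy
  obtain ⟨c⟩ := ‹Nonempty κ›
  have hi : i = i' := by simpa using h' (1, c)
  rw [hi]

theorem blockWord_mem_ghCode_iff [Nonempty κ] {B : F → Matrix κ κ F} {x : F × (κ → F)} :
    blockWord F κ x ∈ ghCode (kroneckerSumFam (mulTable F) B) ↔ x.2 ∈ ghCode (B x.1) := by
  rw [mem_ghCode_kroneckerSumFam]
  constructor
  · rintro ⟨i, c, hc, h⟩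
    have := blockWord_injective (F := F) (κ := κ) (a₁ := x) (a₂ := (i, c)) h
    rwa [this]
  · intro hx
    exact ⟨x.1, x.2, hx, rfl⟩

theorem mem_kernelSubmodule_kroneckerSumFam [Nonempty κ] {B : F → Matrix κ κ F}
    {w : F × κ → F} :
    w ∈ kernelSubmodule (ghCode (kroneckerSumFam (mulTable F) B)) ↔
      ∃ i y, w = blockWord F κ (i, y) ∧
        ∀ (α i' : F), ∀ c ∈ ghCode (B i'), α • y + c ∈ ghCode (B (α * i + i')) := by
  have key : ∀ i y α i' c, α • blockWord F κ (i, y) + blockWord F κ (i', c) =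
      blockWord F κ (α * i + i', α • y + c) := by
    intro i y α i' c
    rw [← map_smul, ← map_add]
    rfl
  constructor
  · intro hw
    obtain ⟨k⟩ := ‹Nonempty κ›
    have : Nonempty κ := ⟨k⟩
    obtain ⟨i, c, hc, h⟩ := mem_ghCode_kroneckerSumFam.1
      (add_mem_of_mem_kernelSubmodule hw (row_mem_ghCode _ ((0 : F), k)))
    have hw' : w = blockWord F κ (i, c - B 0 k) := by
      ext t
      have := congrFun h t
      simp only [Pi.add_apply, kroneckerSumFam, mulTable] at this
      simp only [blockWord_apply, Pi.sub_apply]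
      linear_combination this
    refine ⟨i, _, hw', fun α i' d hd => ?_⟩
    have := mem_kernelSubmodule.1 hw α (blockWord F κ (i', d)) (blockWord_mem_ghCode_iff.2 hd)
    rw [hw', key] at this
    exact blockWord_mem_ghCode_iff.1 this
  · rintro ⟨i, y, rfl, h⟩
    rw [mem_kernelSubmodule]
    intro α w hw
    obtain ⟨i', d, hd, rfl⟩ := mem_ghCode_kroneckerSumFam.1 hw
    have := blockWord_mem_ghCode_iff (x := (α * i + i', α • y + d)).2 (h α i' d hd)
    rwa [← key] at this

/-- Taking the Kronecker sum of `S_q` with a GH matrix raises the dimension of the kernel by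
one. -/
theorem kerDim_kroneckerSumFam_const [Finite κ] [Nonempty κ] (B : Matrix κ κ F) :
    kerDim (ghCode (kroneckerSumFam (mulTable F) fun _ => B)) = kerDim (ghCode B) + 1 := by
  rw [kerDim_eq_finrank, kerDim_eq_finrank]
  have h : kernelSubmodule (ghCode (kroneckerSumFam (mulTable F) fun _ => B)) =
      LinearMap.range ((blockWord F κ).comp
        (LinearMap.id.prodMap (kernelSubmodule (ghCode B)).subtype)) := by
    ext w
    rw [mem_kernelSubmodule_kroneckerSumFam, LinearMap.mem_range]
    constructor
    · rintro ⟨i, y, rfl, hy⟩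
      exact ⟨(i, ⟨y, mem_kernelSubmodule.2 fun α c hc => hy α 0 c hc⟩), rfl⟩
    · rintro ⟨⟨i, ⟨y, hy⟩⟩, rfl⟩
      exact ⟨i, y, rfl, fun α _ c hc => mem_kernelSubmodule.1 hy α c hc⟩
  have hinj : Function.Injective ((blockWord F κ).comp
      (LinearMap.id.prodMap (kernelSubmodule (ghCode B)).subtype)) :=
    blockWord_injective.comp (Function.injective_id.prodMap Subtype.val_injective)
  rw [h, LinearMap.finrank_range_of_inj hinj, Module.finrank_prod, Module.finrank_self, add_comm]

/-- If the first block has a kernel of dimension one and the second block contains no translate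
of the first, the resulting code has a kernel of dimension one. -/
theorem kerDim_kroneckerSumFam_eq_one [Nonempty κ]
    {B : F → Matrix κ κ F} (hB : kerDim (ghCode (B 0)) = 1)
    (hne : ¬ ∃ y : κ → F, ∀ c ∈ ghCode (B 0), y + c ∈ ghCode (B 1)) :
    kerDim (ghCode (kroneckerSumFam (mulTable F) B)) = 1 := by
  obtain ⟨k⟩ := ‹Nonempty κ›
  have : Nonempty κ := ⟨k⟩
  rw [kerDim_eq_finrank] at hB ⊢
  rw [finrank_eq_one_iff_of_nonzero' ⟨fun _ => 1, const_mem_kernelSubmodule _ 1⟩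
    (fun h => one_ne_zero (congrFun (congrArg Subtype.val h) k))] at hB
  rw [finrank_eq_one_iff_of_nonzero' ⟨fun _ => 1, const_mem_kernelSubmodule _ 1⟩
    (fun h => one_ne_zero (congrFun (congrArg Subtype.val h) ((0 : F), k)))]
  rintro ⟨w, hw⟩
  obtain ⟨i, y, rfl, h⟩ := mem_kernelSubmodule_kroneckerSumFam.1 hw
  have hi : i = 0 := by
    by_contra hi
    refine hne ⟨i⁻¹ • y, fun c hc => ?_⟩
    simpa [hi] using h i⁻¹ 0 c hc
  subst hi
  have hy : y ∈ kernelSubmodule (ghCode (B 0)) := mem_kernelSubmodule.2 fun α c hc => by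
    simpa using h α 0 c hc
  obtain ⟨a, ha⟩ := hB ⟨y, hy⟩
  have ha' : ∀ t, a = y t := fun t => by simpa using congrFun (congrArg Subtype.val ha) t
  refine ⟨a, Subtype.ext (funext fun t => ?_)⟩
  simp [blockWord_apply, ha' t.2]

theorem isGH_kroneckerSumFam [Fintype F] [DecidableEq F] [Fintype κ] {lam : ℕ}
    {B : F → Matrix κ κ F} (hB : ∀ i, IsGH lam (B i))
    (hcard : Fintype.card κ = Fintype.card F * lam) :
    IsGH (Fintype.card F * lam) (kroneckerSumFam (mulTable F) B) := by
  classical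
  rintro ⟨i, r⟩ ⟨i', r'⟩ hne a
  change (univ.filter (fun t : F × κ =>
    i * t.1 + B i r t.2 - (i' * t.1 + B i' r' t.2) = a)).card = _
  by_cases hi : i = i'
  · subst hi
    have hr : r ≠ r' := fun h => hne (by rw [h])
    rw [← hB i r r' hr a, ← Finset.card_univ (α := F), ← Finset.card_product]
    congr 1
    ext ⟨j, c⟩
    simp
  · rw [← hcard, ← Finset.card_univ (α := κ)]
    have hi' : i - i' ≠ 0 := sub_ne_zero.2 hi
    refine Finset.card_bij (fun t _ => t.2) (fun _ _ => mem_univ _) ?_ ?_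
    · rintro ⟨j, c⟩ h ⟨j', c'⟩ h' rfl
      simp only [mem_filter, mem_univ, true_and] at h h'
      have : (i - i') * (j - j') = 0 := by linear_combination h - h'
      rw [mul_eq_zero, or_iff_right hi', sub_eq_zero] at this
      rw [this]
    · intro c _
      refine ⟨((a - (B i r c - B i' r' c)) / (i - i'), c), ?_, rfl⟩
      simp only [mem_filter, mem_univ, true_and]
      field_simp
      ring

end Construction

section Relabel

variable {F : Type*} [Field F] [Fintype F] [DecidableEq F]

theorem IsGH.exists_fin {ι : Type*} [Fintype ι] {lam n : ℕ} {H : Matrix ι ι F}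
    (hH : IsGH lam H) (hn : Fintype.card ι = n) :
    ∃ H' : Matrix (Fin n) (Fin n) F, IsGH lam H' ∧ kerDim (ghCode H') = kerDim (ghCode H) := by
  let e : Fin n ≃ ι := (Fintype.equivFinOfCardEq hn).symm
  refine ⟨H.submatrix e e, fun i j hij a => ?_, kerDim_reindex e fun c => ?_⟩
  · rw [← hH (e i) (e j) (e.injective.ne hij) a]
    change (univ.filter (fun t => H (e i) (e t) - H (e j) (e t) = a)).card = _
    exact Finset.card_equiv e (by simp)
  · constructor
    · rintro ⟨α, i, rfl⟩
      exact ⟨α, e.symm i, by ext; simp⟩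
    · rintro ⟨α, i, h⟩
      refine ⟨α, e i, funext fun t => ?_⟩
      simpa using congrFun h (e.symm t)

theorem IsGH.exists_normalized {lam n : ℕ} {H : Matrix (Fin n) (Fin n) F}
    (hH : IsGH lam H) (hn : 0 < n) :
    ∃ H' : Matrix (Fin n) (Fin n) F, IsGH lam H' ∧ Normalized H' ∧
      kerDim (ghCode H') = kerDim (ghCode H) := by
  let z : Fin n := ⟨0, hn⟩
  refine ⟨fun i t => H i t - H z t - (H i z - H z z), fun i j hij a => ?_, fun i t h => ?_, ?_⟩
  · rw [← (hH.equidistributed hij).const_add (H j z - H i z) a]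
    congr 1
    ext t
    simp only [mem_filter, mem_univ, true_and, Pi.sub_apply]
    rw [show H i t - H z t - (H i z - H z z) - (H j t - H z t - (H j z - H z z)) =
      H j z - H i z + (H i t - H j t) by ring]
  · rcases h with h | h
    · have : i = z := Fin.ext h
      subst this
      simp
    · have : t = z := Fin.ext h
      subst this
      simp
  · rw [kerDim_eq_finrank, kerDim_eq_finrank, kernelSubmodule_translate (H z)]
    intro c
    constructor
    · rintro ⟨α, i, rfl⟩
      exact ⟨α - (H i z - H z z), i, by ext; simp only [Pi.add_apply]; ring⟩
    · rintro ⟨α, i, h⟩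
      refine ⟨α + (H i z - H z z), i, funext fun t => ?_⟩
      have := congrFun h t
      simp only [Pi.add_apply] at this
      linear_combination this

theorem IsGH.submatrix_perm {ι : Type*} [Fintype ι] {lam : ℕ} {H : Matrix ι ι F}
    (hH : IsGH lam H) (σ : Equiv.Perm ι) : IsGH lam (H.submatrix id σ) := fun i j hij a => by
  rw [← hH i j hij a]
  change (univ.filter (fun t => H i (σ t) - H j (σ t) = a)).card = _
  exact Finset.card_equiv σ (by simp)

theorem comp_perm_mem_ghCode {F ι : Type*} [Field F] {H : Matrix ι ι F} {σ : Equiv.Perm ι}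
    {c : ι → F} (hc : c ∈ ghCode (H.submatrix id σ)) : c ∘ σ.symm ∈ ghCode H := by
  obtain ⟨α, i, rfl⟩ := hc
  exact ⟨α, i, by ext; simp⟩

/-- A GH code with a kernel of dimension one gives rise to a longer one. -/
theorem IsGH.exists_kerDim_eq_one {ι : Type*} [Fintype ι] {lam : ℕ} {H : Matrix ι ι F}
    (hH : IsGH lam H) (hF : 3 ≤ Fintype.card F)
    (hcard : Fintype.card ι = Fintype.card F * lam) (hlam : 2 ≤ lam)
    (hker : kerDim (ghCode H) = 1) :
    ∃ H' : Matrix (F × ι) (F × ι) F, IsGH (Fintype.card F * lam) H' ∧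
      kerDim (ghCode H') = 1 := by
  obtain ⟨σ, hσ⟩ := hH.exists_perm_not_translate hF hcard hlam
  have hι : Nonempty ι := Fintype.card_pos_iff.1 (by rw [hcard]; positivity)
  let B : F → Matrix ι ι F := fun i => if i = 0 then H else H.submatrix id σ.symm
  refine ⟨kroneckerSumFam (mulTable F) B, isGH_kroneckerSumFam (fun i => ?_) hcard,
    kerDim_kroneckerSumFam_eq_one (by simpa [B] using hker) ?_⟩
  · by_cases hi : i = 0
    · simpa [B, hi] using hH
    · simpa [B, hi] using hH.submatrix_perm σ.symm
  · rintro ⟨y, hy⟩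
    refine hσ ⟨y, fun c hc => ?_⟩
    have := hy c (by simpa [B] using hc)
    simp only [B, one_ne_zero, if_false] at this
    simpa using comp_perm_mem_ghCode this

theorem exists_isGH_kerDim_eq {s : ℕ} (hp : (Fintype.card F).Prime) (hF : 3 ≤ Fintype.card F)
    (hs1 : s ≠ 1) (hs : ¬ Fintype.card F ∣ s)
    (hex : ∃ H₀ : Matrix (Fin (Fintype.card F * s)) (Fin (Fintype.card F * s)) F, IsGH s H₀)
    (h : ℕ) : ∀ k, k ≤ h →
      ∃ H : Matrix (Fin (Fintype.card F ^ (h + 1) * s)) (Fin (Fintype.card F ^ (h + 1) * s)) F,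
        IsGH (Fintype.card F ^ h * s) H ∧ kerDim (ghCode H) = k + 1 := by
  have hs0 : s ≠ 0 := fun h0 => hs (h0 ▸ dvd_zero _)
  have hs2 : 2 ≤ s := by omega
  induction h with
  | zero =>
    intro k hk
    obtain ⟨H₀, hH₀⟩ := hex
    have : Nonempty (Fin (Fintype.card F * s)) := ⟨⟨0, by positivity⟩⟩
    have hle := hH₀.kerDim_le hp hs1 hs (by simp) (by omega) (h := 1) (by simp)
    have hge := one_le_kerDim_ghCode H₀
    obtain ⟨H, hH, hk'⟩ := hH₀.exists_fin (n := Fintype.card F ^ (0 + 1) * s) (by simp)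
    exact ⟨H, by simpa using hH, by omega⟩
  | succ h ih =>
    intro k hk
    have hcard : Fintype.card (Fin (Fintype.card F ^ (h + 1) * s)) =
        Fintype.card F * (Fintype.card F ^ h * s) := by
      rw [Fintype.card_fin]
      ring
    have hlam : 2 ≤ Fintype.card F ^ h * s :=
      hs2.trans (Nat.le_mul_of_pos_left _ (by positivity))
    have hpow : Fintype.card F * (Fintype.card F ^ h * s) = Fintype.card F ^ (h + 1) * s := by
      ring
    have hcard' : Fintype.card (F × Fin (Fintype.card F ^ (h + 1) * s)) =
        Fintype.card F ^ (h + 1 + 1) * s := by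
      rw [Fintype.card_prod, Fintype.card_fin]
      ring
    have : Nonempty (Fin (Fintype.card F ^ (h + 1) * s)) := ⟨⟨0, by positivity⟩⟩
    cases k with
    | zero =>
      obtain ⟨H, hH, hk'⟩ := ih 0 (Nat.zero_le _)
      obtain ⟨H', hH', hk''⟩ := hH.exists_kerDim_eq_one hF hcard hlam hk'
      obtain ⟨H'', h1, h2⟩ := hH'.exists_fin hcard'
      exact ⟨H'', hpow ▸ h1, by rw [h2, hk'']⟩
    | succ k =>
      obtain ⟨H, hH, hk'⟩ := ih k (by omega)
      obtain ⟨H'', h1, h2⟩ := (isGH_kroneckerSumFam (fun _ => hH) hcard).exists_fin hcard'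
      exact ⟨H'', hpow ▸ h1, by rw [h2, kerDim_kroneckerSumFam_const, hk']⟩

end Relabel

theorem stmt12 {p s h k : ℕ} {F : Type*} [Field F] [Fintype F] [DecidableEq F]
    (hcard : Fintype.card F = p) (hp : p.Prime)
    (hs1 : s ≠ 1) (hs : ¬ p ∣ s) (hh : 2 ≤ h)
    (hex : ∃ H₀ : Matrix (Fin (p * s)) (Fin (p * s)) F, IsGH s H₀) :
    (∃ H : Matrix (Fin (p ^ h * s)) (Fin (p ^ h * s)) F,
        IsGH (p ^ (h - 1) * s) H ∧ Normalized H ∧ kerDim (ghCode H) = k) ↔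
      1 ≤ k ∧ k ≤ h := by
  subst hcard
  have hs0 : s ≠ 0 := fun h0 => hs (h0 ▸ dvd_zero _)
  have hpos : 0 < Fintype.card F ^ h * s := by positivity
  have hpow : Fintype.card F ^ h * s = Fintype.card F * (Fintype.card F ^ (h - 1) * s) := by
    rw [← mul_assoc, ← pow_succ', Nat.sub_add_cancel (by omega)]
  constructor
  · rintro ⟨H, hH, -, rfl⟩
    have : Nonempty (Fin (Fintype.card F ^ h * s)) := ⟨⟨0, hpos⟩⟩
    exact ⟨one_le_kerDim_ghCode H, hH.kerDim_le hp hs1 hs (by rw [Fintype.card_fin, hpow])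
      (by positivity) (Fintype.card_fin _)⟩
  · rintro ⟨hk1, hkh⟩
    have hF : 3 ≤ Fintype.card F := by
      by_contra hlt
      have hF2 : Fintype.card F = 2 := by
        have := hp.two_le
        omega
      obtain ⟨H₀, hH₀⟩ := hex
      have := hH₀.dvd_of_card_eq_two hF2 (by rw [Fintype.card_fin, hF2]) (by omega)
      exact hs (hF2 ▸ this)
    obtain ⟨h, rfl⟩ : ∃ h', h = h' + 1 := ⟨h - 1, by omega⟩
    obtain ⟨k, rfl⟩ : ∃ k', k = k' + 1 := ⟨k - 1, by omega⟩
    obtain ⟨H, hH, hker⟩ := exists_isGH_kerDim_eq hp hF hs1 hs hex h k (by omega)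
    obtain ⟨H', h1, h2, h3⟩ := hH.exists_normalized hpos
    exact ⟨H', h1, h2, h3.trans hker⟩
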